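/- The ℂ-vector space of homogeneous polynomials of degree 6 in ℂ[x,y,z] vanishing at all 15 points P₁,…,P₁₅ of Z(H₃) has dimension 13, and the 13 sextics g₁ = L₁f₁, g₂ = L₁f₂, g₃ = L₁f₃, g₄ = L₁f₄, g₅ = L₁f₅, g₆ = L₁f₆, g₇ = L₂f₁, g₈ = L₂f₃, g₉ = L₂f₄, g₁₀ = L₂f₅, g₁₁ = L₂f₆, g₁₂ = L₃f₁, g₁₃ = L₃f₂ form a basis of this space. -/

import Mathlib

open MvPolynomial

/-- The six linear forms dual to the lines of the `H₃` configuration. -/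
noncomputable def H3L (u : ℂ) : Fin 6 → MvPolynomial (Fin 3) ℂ :=
  ![X 1 - C (u - 1) * X 2, X 1 + C (u - 1) * X 2,
    X 0 - C u * X 2, X 0 + C u * X 2,
    X 0 - C (u - 1) * X 1, X 0 + C (u - 1) * X 1]

/-- The six quintics `fᵢ = ∏_{j ≠ i} Lⱼ`. -/
noncomputable def H3f (u : ℂ) (i : Fin 6) : MvPolynomial (Fin 3) ℂ :=
  ∏ j ∈ Finset.univ.erase i, H3L u j

/-- The 13 sextics `g₁ = L₁f₁, …, g₆ = L₁f₆, g₇ = L₂f₁, g₈ = L₂f₃, g₉ = L₂f₄, g₁₀ = L₂f₅,`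
`g₁₁ = L₂f₆, g₁₂ = L₃f₁, g₁₃ = L₃f₂`. -/
noncomputable def H3g (u : ℂ) : Fin 13 → MvPolynomial (Fin 3) ℂ :=
  ![H3L u 0 * H3f u 0, H3L u 0 * H3f u 1, H3L u 0 * H3f u 2,
    H3L u 0 * H3f u 3, H3L u 0 * H3f u 4, H3L u 0 * H3f u 5,
    H3L u 1 * H3f u 0, H3L u 1 * H3f u 2, H3L u 1 * H3f u 3,
    H3L u 1 * H3f u 4, H3L u 1 * H3f u 5,
    H3L u 2 * H3f u 0, H3L u 2 * H3f u 1]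

/-- The 15 points of the `H₃` root-system configuration. -/
noncomputable def H3pts (u : ℂ) : Fin 15 → (Fin 3 → ℂ) :=
  ![![1,0,0], ![0,1,0], ![0,0,1],
    ![1,u,u^2], ![-1,u,u^2], ![1,-u,u^2], ![1,u,-u^2],
    ![u,-u^2,1], ![-u,u^2,1], ![u,u^2,-1], ![u,u^2,1],
    ![u^2,1,-u], ![u^2,-1,u], ![-u^2,1,u], ![u^2,1,u]]

/-- The `ℂ`-vector space of homogeneous polynomials of degree `d` in `ℂ[x,y,z]`
vanishing at all 15 points of `Z(H₃)`. -/
noncomputable def H3V (u : ℂ) (d : ℕ) : Submodule ℂ (MvPolynomial (Fin 3) ℂ) :=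
  homogeneousSubmodule (Fin 3) ℂ d ⊓
    ⨅ i : Fin 15, LinearMap.ker (aeval (R := ℂ) (H3pts u i)).toLinearMap

/-! The six lines `Lᵢ = 0` are in general position and the 15 points are their pairwise
intersections. The product of the four forms not vanishing at a point, times the square of one of
them, separates this point from the others, so the points impose independent conditions on the
`28`-dimensional space of sextics and `13 = 28 - 15`.

For independence, suppose `∑ Mᵢ fᵢ = 0` with linear `Mᵢ`. Every `fᵢ` with `i ≠ k` is divisible by
`Lₖ`, whereas `fₖ` is prime to it, so `Mₖ = cₖ Lₖ`, and then `∑ cₖ = 0`. For a combination of the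
`gᵢ` the form `M₁` lies in `⟨L₁, L₂, L₃⟩`, `M₂` in `⟨L₁, L₃⟩` and every other `Mₖ` in `⟨L₁, L₂⟩`. As
any three of the `Lᵢ` are linearly independent, `Mₖ = 0` for `k ≠ 1` and `M₁ = c₁ L₁`; finally
`c₁ = ∑ cₖ = 0`. -/

section LinearAlgebra

variable {κ : Type*}

lemma dualCoannihilator_span_range {R M : Type*} [CommSemiring R] [AddCommMonoid M] [Module R M]
    (φ : κ → Module.Dual R M) :
    (Submodule.span R (Set.range φ)).dualCoannihilator = ⨅ j, LinearMap.ker (φ j) := by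
  ext x
  simp only [Submodule.mem_dualCoannihilator, Submodule.mem_iInf, LinearMap.mem_ker]
  refine ⟨fun h j => h _ (Submodule.subset_span ⟨j, rfl⟩), fun h ψ hψ => ?_⟩
  induction hψ using Submodule.span_induction with
  | mem ψ hψ => obtain ⟨j, rfl⟩ := hψ; exact h j
  | zero => rfl
  | add ψ₁ ψ₂ _ _ h₁ h₂ => rw [LinearMap.add_apply, h₁, h₂, add_zero]
  | smul c ψ _ h => rw [LinearMap.smul_apply, h, smul_zero]

variable {K V : Type*} [Field K] [AddCommGroup V] [Module K V]

lemma finrank_iInf_ker_add_card [Fintype κ] [FiniteDimensional K V] {φ : κ → Module.Dual K V}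
    (hφ : LinearIndependent K φ) :
    Module.finrank K ↥(⨅ j, LinearMap.ker (φ j)) + Fintype.card κ = Module.finrank K V := by
  rw [← dualCoannihilator_span_range, ← finrank_span_eq_card hφ, add_comm]
  exact Subspace.finrank_add_finrank_dualCoannihilator_eq _

lemma linearIndependent_of_separating {φ : κ → Module.Dual K V} {v : κ → V}
    (hne : ∀ j, φ j (v j) ≠ 0) (hzero : Pairwise fun i j => φ j (v i) = 0) :
    LinearIndependent K φ := by
  refine .of_pairwise_dual_eq_zero_one φ
    (fun i => Module.Dual.eval K V ((φ i (v i))⁻¹ • v i)) (fun i j hij => ?_) fun i => ?_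
  · simp [hzero hij]
  · simp [hne i]

end LinearAlgebra

section Forms

lemma dvd_of_sum_mul_prod_erase_eq_zero {R ι : Type*} [CommRing R] [Fintype ι] [DecidableEq ι]
    {p m : ι → R} {k : ι} (hp : Prime (p k)) (hndvd : ∀ i ≠ k, ¬ p k ∣ p i)
    (hsum : ∑ i, m i * ∏ j ∈ Finset.univ.erase i, p j = 0) : p k ∣ m k := by
  have hothers : p k ∣ ∑ i ∈ Finset.univ.erase k, m i * ∏ j ∈ Finset.univ.erase i, p j := by
    refine Finset.dvd_sum fun i hi => Dvd.dvd.mul_left (Finset.dvd_prod_of_mem p ?_) _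
    simpa using (Finset.ne_of_mem_erase hi).symm
  have hk : p k ∣ m k * ∏ j ∈ Finset.univ.erase k, p j := by
    rw [← dvd_add_left hothers, Finset.add_sum_erase Finset.univ
      (fun i => m i * ∏ j ∈ Finset.univ.erase i, p j) (Finset.mem_univ k), hsum]
    exact dvd_zero _
  refine (hp.dvd_or_dvd hk).resolve_right fun hprod => ?_
  obtain ⟨i, hi, hdvd⟩ := hp.exists_mem_finset_dvd hprod
  exact hndvd i (Finset.ne_of_mem_erase hi) hdvd

variable {σ : Type*}

lemma prime_of_isHomogeneous_one {K : Type*} [Field K] {p : MvPolynomial σ K}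
    (hp : p.IsHomogeneous 1) (hp0 : p ≠ 0) : Prime p := by
  refine (irreducible_of_totalDegree_eq_one (hp.totalDegree hp0) fun c hc => ?_).prime
  obtain ⟨s, hs⟩ := ne_zero_iff.1 hp0
  exact isUnit_of_dvd_unit (hc s) hs.isUnit

lemma exists_eq_smul_of_dvd_of_isHomogeneous {R : Type*} [CommRing R] [IsDomain R] {d : ℕ}
    {p q : MvPolynomial σ R} (hp : p.IsHomogeneous d) (hq : q.IsHomogeneous d) (hdvd : p ∣ q) :
    ∃ c : R, q = c • p := by
  obtain ⟨r, rfl⟩ := hdvd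
  by_cases hpr : p * r = 0
  · exact ⟨0, by rw [hpr, zero_smul]⟩
  have hp0 := left_ne_zero_of_mul hpr
  have hdeg := totalDegree_mul_of_isDomain hp0 (right_ne_zero_of_mul hpr)
  rw [hq.totalDegree hpr, hp.totalDegree hp0, left_eq_add] at hdeg
  refine ⟨coeff 0 r, ?_⟩
  rw [smul_eq_C_mul, mul_comm, ← totalDegree_eq_zero_iff_eq_C.1 hdeg]

lemma finrank_homogeneousSubmodule (R σ : Type*) [CommSemiring R] [StrongRankCondition R]
    [Fintype σ] (d : ℕ) :
    Module.finrank R (homogeneousSubmodule σ R d) = (Fintype.card σ).multichoose d := by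
  classical
  have hexp : {s : σ →₀ ℕ | s.degree = d} =
      ↑(Finset.univ.finsuppAntidiag d : Finset (σ →₀ ℕ)) := by
    ext s
    simp [Finset.mem_finsuppAntidiag, Finsupp.degree_eq_sum]
  rw [homogeneousSubmodule_eq_finsupp_supported,
    (AddMonoidAlgebra.supportedEquivFinsupp (R := R) (S := R) _).finrank_eq, hexp,
    Module.finrank_finsupp_self]
  simp [Finset.card_finsuppAntidiag_nat_eq_multichoose]

variable {κ : Type*}

/-- The space of forms of degree `d` vanishing on a family of points, which are given by
representatives in affine space. It is the degree `d` part of their homogeneous ideal. -/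
noncomputable def formsVanishingAt {R : Type*} [CommSemiring R] (P : κ → σ → R) (d : ℕ) :
    Submodule R (MvPolynomial σ R) :=
  homogeneousSubmodule σ R d ⊓ ⨅ j, LinearMap.ker (aeval (R := R) (P j)).toLinearMap

lemma mem_formsVanishingAt {R : Type*} [CommSemiring R] {P : κ → σ → R} {d : ℕ}
    {p : MvPolynomial σ R} :
    p ∈ formsVanishingAt P d ↔ p.IsHomogeneous d ∧ ∀ j, eval (P j) p = 0 := by
  simp [formsVanishingAt, Submodule.mem_inf, aeval_eq_eval]

lemma finrank_formsVanishingAt_add_card_of_separating {K : Type*} [Field K] [Fintype κ]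
    [Fintype σ] {P : κ → σ → K} {d : ℕ} {q : κ → MvPolynomial σ K} (hq : ∀ j, (q j).IsHomogeneous d)
    (hne : ∀ j, eval (P j) (q j) ≠ 0) (hzero : Pairwise fun i j => eval (P j) (q i) = 0) :
    Module.finrank K (formsVanishingAt P d) + Fintype.card κ =
      (Fintype.card σ).multichoose d := by
  have : FiniteDimensional K (homogeneousSubmodule σ K d) :=
    Module.Finite.iff_fg.2 (homogeneousSubmodule_fg σ K d)
  let φ (j : κ) : Module.Dual K (homogeneousSubmodule σ K d) :=
    (aeval (R := K) (P j)).toLinearMap ∘ₗ Submodule.subtype _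
  have hφ : LinearIndependent K φ :=
    linearIndependent_of_separating (v := fun j => ⟨q j, hq j⟩) hne hzero
  have hmap : formsVanishingAt P d =
      (⨅ j, LinearMap.ker (φ j)).map (homogeneousSubmodule σ K d).subtype := by
    simp only [φ, LinearMap.ker_comp, ← Submodule.comap_iInf, Submodule.map_comap_subtype,
      formsVanishingAt]
  rw [hmap, Submodule.finrank_map_subtype_eq, finrank_iInf_ker_add_card hφ,
    finrank_homogeneousSubmodule K σ d]

end Forms

/-- A star configuration: the lines (hyperplanes) cut out by the linear forms `L i` are in general
position and the `P j` are representatives of their pairwise intersection points, `P j` lying on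
precisely the two lines indexed by `pair j`. General position is encoded in the incidences: any two
of the lines meet in some `P j`, which lies on no third one. -/
structure IsStarConfiguration {ι κ σ K : Type*} [Field K] (L : ι → MvPolynomial σ K)
    (P : κ → σ → K) (pair : κ → Finset ι) : Prop where
  isHomogeneous : ∀ i, (L i).IsHomogeneous 1
  eval_eq_zero_iff : ∀ j i, eval (P j) (L i) = 0 ↔ i ∈ pair j
  bijOn_pair : Set.BijOn pair Set.univ {s | s.card = 2}

namespace IsStarConfiguration

variable {ι κ σ K : Type*} [Field K] {L : ι → MvPolynomial σ K} {P : κ → σ → K}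
  {pair : κ → Finset ι}

lemma card_pair (h : IsStarConfiguration L P pair) (j : κ) : (pair j).card = 2 :=
  h.bijOn_pair.mapsTo (Set.mem_univ j)

lemma exists_mem_pair_ne (h : IsStarConfiguration L P pair) (j : κ) (i : ι) :
    ∃ k ∈ pair j, k ≠ i :=
  Finset.exists_mem_ne (by rw [h.card_pair]; exact one_lt_two) i

lemma exists_mem_pair_notMem (h : IsStarConfiguration L P pair) {i j : κ} (hij : i ≠ j) :
    ∃ k ∈ pair j, k ∉ pair i := by
  by_contra! hsub
  exact hij.symm (h.bijOn_pair.injOn (Set.mem_univ j) (Set.mem_univ i)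
    (Finset.eq_of_subset_of_card_le hsub (by rw [h.card_pair, h.card_pair])))

lemma exists_intersection (h : IsStarConfiguration L P pair) {a b : ι} (hab : a ≠ b) :
    ∃ p, eval p (L a) = 0 ∧ eval p (L b) = 0 ∧ ∀ i, i ≠ a → i ≠ b → eval p (L i) ≠ 0 := by
  classical
  obtain ⟨j, -, hj⟩ := h.bijOn_pair.surjOn (Finset.card_pair hab)
  refine ⟨P j, ?_⟩
  simp +contextual [h.eval_eq_zero_iff, hj]

lemma eq_zero_of_smul_add_smul_add_smul_eq_zero (h : IsStarConfiguration L P pair) {a b c : ι}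
    (hab : a ≠ b) (hac : a ≠ c) (hbc : b ≠ c) {α β γ : K}
    (hsum : α • L a + β • L b + γ • L c = 0) : α = 0 ∧ β = 0 ∧ γ = 0 := by
  have heval (p : σ → K) : α * eval p (L a) + β * eval p (L b) + γ * eval p (L c) = 0 := by
    simpa [smul_eval] using congrArg (eval p) hsum
  obtain ⟨p, hpb, hpc, hp⟩ := h.exists_intersection hbc
  obtain ⟨q, hqa, hqc, hq⟩ := h.exists_intersection hac
  obtain ⟨r, hra, hrb, hr⟩ := h.exists_intersection hab
  refine ⟨?_, ?_, ?_⟩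
  · simpa [hpb, hpc, hp a hab hac] using heval p
  · simpa [hqa, hqc, hq b hab.symm hbc] using heval q
  · simpa [hra, hrb, hr c hac.symm hbc.symm] using heval r

variable [Fintype ι]

lemma not_dvd (h : IsStarConfiguration L P pair) (hcard : 2 < Fintype.card ι) {i k : ι}
    (hik : i ≠ k) : ¬ L k ∣ L i := by
  classical
  obtain ⟨m, -, hm⟩ := Finset.exists_mem_notMem_of_card_lt_card
    ((Finset.card_pair hik).trans_lt hcard)
  simp only [Finset.mem_insert, Finset.mem_singleton, not_or] at hm
  obtain ⟨p, hpk, -, hp⟩ := h.exists_intersection (Ne.symm hm.2)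
  rintro ⟨q, hq⟩
  exact hp i hik (Ne.symm hm.1) (by rw [hq, map_mul, hpk, zero_mul])

lemma ne_zero (h : IsStarConfiguration L P pair) (hcard : 2 < Fintype.card ι) (i : ι) :
    L i ≠ 0 := by
  obtain ⟨k, hki⟩ := Fintype.exists_ne_of_one_lt_card (one_lt_two.trans hcard) i
  intro hi
  exact h.not_dvd hcard hki.symm (hi ▸ dvd_zero (L k))

lemma exists_separating_form (h : IsStarConfiguration L P pair) (hcard : 2 < Fintype.card ι)
    {d : ℕ} (hd : Fintype.card ι ≤ d + 2) (j : κ) :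
    ∃ q : MvPolynomial σ K, q.IsHomogeneous d ∧ eval (P j) q ≠ 0 ∧
      ∀ k ≠ j, eval (P k) q = 0 := by
  classical
  obtain ⟨m, -, hm⟩ := Finset.exists_mem_notMem_of_card_lt_card
    ((h.card_pair j).trans_lt hcard)
  refine ⟨L m ^ (d + 2 - Fintype.card ι) * ∏ i ∈ (pair j)ᶜ, L i, ?_, ?_, fun k hkj => ?_⟩
  · have hprod := IsHomogeneous.prod (pair j)ᶜ L 1 fun i _ => h.isHomogeneous i
    convert ((h.isHomogeneous m).pow (d + 2 - Fintype.card ι)).mul hprod using 1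
    simp only [one_mul, Pi.one_apply, Finset.sum_const, Finset.card_compl, h.card_pair,
      smul_eq_mul, mul_one]
    omega
  · simp only [map_mul, map_pow, map_prod]
    refine mul_ne_zero (pow_ne_zero _ (mt (h.eval_eq_zero_iff j m).1 hm))
      (Finset.prod_ne_zero_iff.2 fun i hi => ?_)
    exact mt (h.eval_eq_zero_iff j i).1 (Finset.mem_compl.1 hi)
  · obtain ⟨i, hik, hij⟩ := h.exists_mem_pair_notMem hkj.symm
    rw [map_mul, map_prod, Finset.prod_eq_zero (Finset.mem_compl.2 hij)
      ((h.eval_eq_zero_iff k i).2 hik), mul_zero]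

lemma finrank_formsVanishingAt_add_card [Fintype κ] [Fintype σ]
    (h : IsStarConfiguration L P pair) (hcard : 2 < Fintype.card ι) {d : ℕ}
    (hd : Fintype.card ι ≤ d + 2) :
    Module.finrank K (formsVanishingAt P d) + Fintype.card κ =
      (Fintype.card σ).multichoose d := by
  choose q hq hne hzero using h.exists_separating_form hcard hd
  exact finrank_formsVanishingAt_add_card_of_separating hq hne fun i j hij => hzero i j hij.symm

variable [DecidableEq ι]

lemma mul_prod_erase_mem_formsVanishingAt (h : IsStarConfiguration L P pair) (k i : ι) :
    L k * ∏ j ∈ Finset.univ.erase i, L j ∈ formsVanishingAt P (Fintype.card ι) := by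
  refine mem_formsVanishingAt.2 ⟨?_, fun j => ?_⟩
  · have hprod := IsHomogeneous.prod (Finset.univ.erase i) L 1 fun j _ => h.isHomogeneous j
    convert (h.isHomogeneous k).mul hprod using 1
    simp [Nat.add_sub_cancel' (Fintype.card_pos_iff.2 ⟨i⟩)]
  · obtain ⟨m, hmj, hmi⟩ := h.exists_mem_pair_ne j i
    rw [map_mul, map_prod, Finset.prod_eq_zero (Finset.mem_erase.2 ⟨hmi, Finset.mem_univ m⟩)
      ((h.eval_eq_zero_iff j m).2 hmj), mul_zero]

lemma exists_eq_smul_of_sum_mul_prod_erase_eq_zero (h : IsStarConfiguration L P pair)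
    (hcard : 2 < Fintype.card ι) {M : ι → MvPolynomial σ K} (hM : ∀ i, (M i).IsHomogeneous 1)
    (hsum : ∑ i, M i * ∏ j ∈ Finset.univ.erase i, L j = 0) :
    ∃ c : ι → K, (∀ i, M i = c i • L i) ∧ ∑ i, c i = 0 := by
  have hdvd (k : ι) : L k ∣ M k :=
    dvd_of_sum_mul_prod_erase_eq_zero
      (prime_of_isHomogeneous_one (h.isHomogeneous k) (h.ne_zero hcard k))
      (fun i hik => h.not_dvd hcard hik) hsum
  choose c hc using fun k =>
    exists_eq_smul_of_dvd_of_isHomogeneous (h.isHomogeneous k) (hM k) (hdvd k)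
  refine ⟨c, hc, ?_⟩
  have hprod : ∏ j, L j ≠ 0 := Finset.prod_ne_zero_iff.2 fun j _ => h.ne_zero hcard j
  have hsmul : (∑ i, c i) • ∏ j, L j = 0 := by
    simpa only [hc, smul_mul_assoc, Finset.mul_prod_erase _ L (Finset.mem_univ _),
      ← Finset.sum_smul] using hsum
  exact (smul_eq_zero.1 hsmul).resolve_right hprod

lemma eq_zero_of_sum_three_mul_prod_erase_eq_zero (h : IsStarConfiguration L P pair)
    {a b c : ι} (hab : a ≠ b) (hac : a ≠ c) (hbc : b ≠ c) {α β γ : ι → K} (hβ : β b = 0)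
    (hγ : ∀ i, i ≠ a → i ≠ b → γ i = 0)
    (hsum : ∑ i, (α i • L a + β i • L b + γ i • L c) * ∏ j ∈ Finset.univ.erase i, L j = 0) :
    α = 0 ∧ β = 0 ∧ γ = 0 := by
  have hcard : 2 < Fintype.card ι :=
    Finset.two_lt_card.2 ⟨a, Finset.mem_univ a, b, Finset.mem_univ b, c, Finset.mem_univ c,
      hab, hac, hbc⟩
  have hlin (i : ι) : (α i • L a + β i • L b + γ i • L c).IsHomogeneous 1 := by
    have hsmul (t : K) (k : ι) : (t • L k).IsHomogeneous 1 := by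
      simpa only [smul_eq_C_mul] using (h.isHomogeneous k).C_mul t
    exact ((hsmul _ _).add (hsmul _ _)).add (hsmul _ _)
  obtain ⟨t, ht, htsum⟩ := h.exists_eq_smul_of_sum_mul_prod_erase_eq_zero hcard hlin hsum
  have hcol_b : α b = 0 ∧ γ b = 0 ∧ t b = 0 := by
    have hrel : α b • L a + γ b • L c + (-t b) • L b = 0 := by
      rw [neg_smul, ← ht b, hβ]; module
    simpa using h.eq_zero_of_smul_add_smul_add_smul_eq_zero hac hab hbc.symm hrel
  have hcol (i : ι) (hia : i ≠ a) (hib : i ≠ b) : α i = 0 ∧ β i = 0 ∧ t i = 0 := by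
    have hrel : α i • L a + β i • L b + (-t i) • L i = 0 := by
      rw [neg_smul, ← ht i, hγ i hia hib]; module
    simpa using h.eq_zero_of_smul_add_smul_add_smul_eq_zero hab hia.symm hib.symm hrel
  have ht0 (i : ι) (hia : i ≠ a) : t i = 0 := by
    obtain rfl | hib := eq_or_ne i b
    exacts [hcol_b.2.2, (hcol i hia hib).2.2]
  have hta : t a = 0 := by
    rwa [Finset.sum_eq_single a (fun i _ => ht0 i) (by simp)] at htsum
  have hcol_a : α a = 0 ∧ β a = 0 ∧ γ a = 0 :=
    h.eq_zero_of_smul_add_smul_add_smul_eq_zero hab hac hbc (by rw [ht a, hta, zero_smul])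
  have hcoeff (i : ι) : α i = 0 ∧ β i = 0 ∧ γ i = 0 := by
    obtain rfl | hia := eq_or_ne i a
    · exact hcol_a
    obtain rfl | hib := eq_or_ne i b
    · exact ⟨hcol_b.1, hβ, hcol_b.2.1⟩
    · exact ⟨(hcol i hia hib).1, (hcol i hia hib).2.1, hγ i hia hib⟩
  exact ⟨funext fun i => (hcoeff i).1, funext fun i => (hcoeff i).2.1,
    funext fun i => (hcoeff i).2.2⟩

end IsStarConfiguration

section H3

/-- The two lines of the `H₃` configuration through each of its 15 points: the entry at `j` holds
the indices of the two forms vanishing at `Pⱼ₊₁`, the form `Lᵢ₊₁` having index `i`. -/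
def H3pair : Fin 15 → Finset (Fin 6) :=
  ![{0, 1}, {2, 3}, {4, 5}, {0, 4}, {0, 5}, {1, 5}, {1, 4}, {2, 5}, {3, 5}, {3, 4}, {2, 4},
    {1, 3}, {1, 2}, {0, 3}, {0, 2}]

lemma isHomogeneous_H3L (u : ℂ) (i : Fin 6) : (H3L u i).IsHomogeneous 1 := by
  have hX (k : Fin 3) : (X k : MvPolynomial (Fin 3) ℂ).IsHomogeneous 1 := isHomogeneous_X ℂ k
  have hCX := isHomogeneous_C_mul_X (R := ℂ) (σ := Fin 3)
  fin_cases i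
  exacts [(hX 1).sub (hCX _ 2), (hX 1).add (hCX _ 2), (hX 0).sub (hCX _ 2),
    (hX 0).add (hCX _ 2), (hX 0).sub (hCX _ 1), (hX 0).add (hCX _ 1)]

lemma eval_H3L_H3pts_eq_zero_iff {u : ℂ} (hu : u ^ 2 = u + 1) (j : Fin 15) (i : Fin 6) :
    eval (H3pts u j) (H3L u i) = 0 ↔ i ∈ H3pair j := by
  fin_cases j <;> fin_cases i <;>
    simp only [H3L, H3pts, H3pair, Fin.isValue, Fin.reduceFinMk, Fin.zero_eta, Fin.mk_one,
      Matrix.cons_val, map_add, map_sub, map_mul, eval_X, eval_C, Finset.mem_insert,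
      Finset.mem_singleton, Fin.reduceEq] <;>
    grind

lemma bijOn_H3pair : Set.BijOn H3pair Set.univ {s | s.card = 2} := by
  have hinj : Function.Injective H3pair := by decide
  have hcard : ∀ j, (H3pair j).card = 2 := by decide
  have hsurj : ∀ s : Finset (Fin 6), s.card = 2 → ∃ j, H3pair j = s := by decide
  exact ⟨fun j _ => hcard j, hinj.injOn, fun s hs => by simpa using hsurj s hs⟩

lemma isStarConfiguration_H3 {u : ℂ} (hu : u ^ 2 = u + 1) :
    IsStarConfiguration (H3L u) (H3pts u) H3pair where
  isHomogeneous := isHomogeneous_H3L u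
  eval_eq_zero_iff := eval_H3L_H3pts_eq_zero_iff hu
  bijOn_pair := bijOn_H3pair

lemma H3V_eq_formsVanishingAt (u : ℂ) (d : ℕ) : H3V u d = formsVanishingAt (H3pts u) d := rfl

lemma H3g_mem_H3V {u : ℂ} (hu : u ^ 2 = u + 1) (i : Fin 13) : H3g u i ∈ H3V u 6 := by
  rw [H3V_eq_formsVanishingAt]
  have hmem := (isStarConfiguration_H3 hu).mul_prod_erase_mem_formsVanishingAt
  fin_cases i <;> exact hmem _ _

lemma finrank_H3V {u : ℂ} (hu : u ^ 2 = u + 1) : Module.finrank ℂ (H3V u 6) = 13 := by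
  rw [H3V_eq_formsVanishingAt]
  have hrank := (isStarConfiguration_H3 hu).finrank_formsVanishingAt_add_card (d := 6)
    (by simp) (by simp)
  have h28 : Nat.multichoose 3 6 = 28 := by rw [Nat.multichoose_eq]; decide
  rw [Fintype.card_fin, Fintype.card_fin, h28] at hrank
  omega

lemma sum_smul_H3g (u : ℂ) (c : Fin 13 → ℂ) :
    ∑ i, c i • H3g u i =
      ∑ i, (![c 0, c 1, c 2, c 3, c 4, c 5] i • H3L u 0 +
        ![c 6, 0, c 7, c 8, c 9, c 10] i • H3L u 1 +
        ![c 11, c 12, 0, 0, 0, 0] i • H3L u 2) * H3f u i := by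
  simp only [H3g, smul_eq_C_mul, Fin.isValue, Fin.sum_univ_succ, Matrix.cons_val_zero,
    Matrix.cons_val_succ, Fin.succ_zero_eq_one, Fin.succ_one_eq_two, Fin.reduceSucc,
    Finset.univ_unique, Fin.default_eq_zero, Matrix.cons_val_fin_one, Finset.sum_singleton,
    Nat.succ_eq_add_one, Nat.reduceAdd, C_0, zero_mul, add_zero]
  ring

lemma linearIndependent_H3g {u : ℂ} (hu : u ^ 2 = u + 1) : LinearIndependent ℂ (H3g u) := by
  refine Fintype.linearIndependent_iff.2 fun c hc => ?_
  rw [sum_smul_H3g] at hc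
  have hγ₀ (i : Fin 6) (hi0 : i ≠ 0) (hi1 : i ≠ 1) : ![c 11, c 12, 0, 0, 0, 0] i = 0 := by
    fin_cases i <;> first | contradiction | rfl
  obtain ⟨hα, hβ, hγ⟩ :=
    (isStarConfiguration_H3 hu).eq_zero_of_sum_three_mul_prod_erase_eq_zero
      (a := 0) (b := 1) (c := 2) (by decide) (by decide) (by decide) rfl hγ₀ hc
  intro i
  fin_cases i
  exacts [congrFun hα 0, congrFun hα 1, congrFun hα 2, congrFun hα 3, congrFun hα 4,
    congrFun hα 5, congrFun hβ 0, congrFun hβ 2, congrFun hβ 3, congrFun hβ 4, congrFun hβ 5,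
    congrFun hγ 0, congrFun hγ 1]

end H3

/-- The space of homogeneous sextics in `ℂ[x,y,z]` vanishing at all 15 points of `Z(H₃)`
has dimension 13, and the 13 sextics `g₁, …, g₁₃` form a basis of it. -/
theorem H3g_is_basis_of_sextics (u : ℂ) (hu : u ^ 2 = u + 1) :
    Module.finrank ℂ (H3V u 6) = 13 ∧
    (∀ i, H3g u i ∈ H3V u 6) ∧ LinearIndependent ℂ (H3g u) ∧
    Submodule.span ℂ (Set.range (H3g u)) = H3V u 6 := by
  have hmem := H3g_mem_H3V hu
  have hindep := linearIndependent_H3g hu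
  have hrank := finrank_H3V hu
  have : FiniteDimensional ℂ (H3V u 6) :=
    Module.finite_of_finrank_pos (by rw [hrank]; norm_num)
  refine ⟨hrank, hmem, hindep, Submodule.eq_of_le_of_finrank_eq ?_ ?_⟩
  · rw [Submodule.span_le]
    exact Set.range_subset_iff.2 hmem
  · rw [finrank_span_eq_card hindep, hrank, Fintype.card_fin]
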